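/- In the tower construction, for every n ≥ 2: Bₙ = ⋂ { (Dₙ)_q : q ∈ Spec(Dₙ), q ≠ 𝓜ₙ }, the intersection taken inside the quotient field Kₙ. -/

import Mathlib

/- Preamble: the tower construction of Fontana–Kabbaj (Example 3.1).
All rings are realized as subsets/subrings of one ambient field `Amb k0 r`:
the rational function field over `k0` in the indeterminates
`X₁, X₂, …` (indexed by `ℕ`), `Y`, and `Z₁, …, Z_{r-1}`. -/

noncomputable section

open Polynomial

/-- Index type for the indeterminates: `Sum.inl n` is `Xₙ`, `Sum.inr (Sum.inl ())` is `Y`,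
and `Sum.inr (Sum.inr i)` is `Z_{i+1}`. -/
abbrev TowerVars (r : ℕ) : Type := ℕ ⊕ (Unit ⊕ Fin (r - 1))

/-- The ambient field: the fraction field of the polynomial ring over `k0` in all the
indeterminates. -/
abbrev Amb (k0 : Type) [Field k0] (r : ℕ) : Type :=
  FractionRing (MvPolynomial (TowerVars r) k0)

variable (k0 : Type) [Field k0] (r : ℕ)

/-- The indeterminate `Xₙ` as an element of the ambient field. -/
def ambX (n : ℕ) : Amb k0 r :=
  algebraMap (MvPolynomial (TowerVars r) k0) (Amb k0 r) (MvPolynomial.X (Sum.inl n))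

/-- The indeterminate `Y` as an element of the ambient field. -/
def ambY : Amb k0 r :=
  algebraMap (MvPolynomial (TowerVars r) k0) (Amb k0 r) (MvPolynomial.X (Sum.inr (Sum.inl ())))

/-- The indeterminates `Z₁, …, Z_{r-1}` as elements of the ambient field. -/
def ambZ (i : Fin (r - 1)) : Amb k0 r :=
  algebraMap (MvPolynomial (TowerVars r) k0) (Amb k0 r) (MvPolynomial.X (Sum.inr (Sum.inr i)))

/-- The image of the base field `k0` in the ambient field. -/
def baseSet : Set (Amb k0 r) :=
  Set.range fun c : k0 => algebraMap (MvPolynomial (TowerVars r) k0) (Amb k0 r) (MvPolynomial.C c)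

/-- `kₙ := k0(X₁, …, Xₙ)` as a subfield of the ambient field. -/
def kfld (n : ℕ) : Subfield (Amb k0 r) :=
  Subfield.closure (baseSet k0 r ∪ {x | ∃ i, 1 ≤ i ∧ i ≤ n ∧ x = ambX k0 r i})

/-- `Fₙ := kₙ(Z₁, …, Z_{r-1})`. -/
def Ffld (n : ℕ) : Subfield (Amb k0 r) :=
  Subfield.closure (↑(kfld k0 r n) ∪ Set.range (ambZ k0 r))

/-- `Kₙ := Fₙ(Y)`. -/
def Kfld (n : ℕ) : Subfield (Amb k0 r) :=
  Subfield.closure (↑(Ffld k0 r n) ∪ {ambY k0 r})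

/-- The polynomial ring `Fₙ[Y]` as a subring of the ambient field. -/
def polyRing (n : ℕ) : Subring (Amb k0 r) :=
  Subring.closure (↑(Ffld k0 r n) ∪ {ambY k0 r})

/-- `Vₙ := Fₙ[Y]_{(Y)}`, the localization of `Fₙ[Y]` at the prime `(Y)`, as a subset of
the ambient field. -/
def Vset (n : ℕ) : Set (Amb k0 r) :=
  {x | ∃ f ∈ polyRing k0 r n, ∃ g ∈ polyRing k0 r n,
    (¬ ∃ h ∈ polyRing k0 r n, g = ambY k0 r * h) ∧ x = f / g}

/-- `Mₙ := Y·Fₙ[Y]_{(Y)}`, the maximal ideal of `Vₙ`. -/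
def Mset (n : ℕ) : Set (Amb k0 r) :=
  {x | ∃ v ∈ Vset k0 r n, x = ambY k0 r * v}

/-- `Aₙ := kₙ + Mₙ`. -/
def Aset (n : ℕ) : Set (Amb k0 r) :=
  {x | ∃ c ∈ kfld k0 r n, ∃ m ∈ Mset k0 r n, x = c + m}

/-- `k := ⋃ₙ kₙ` as a subset of the ambient field. -/
def kfldU : Set (Amb k0 r) := ⋃ n, (kfld k0 r n : Set (Amb k0 r))

/-- `F := k(Z₁, …, Z_{r-1}) = ⋃ₙ Fₙ`. -/
def FfldU : Subfield (Amb k0 r) :=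
  Subfield.closure (kfldU k0 r ∪ Set.range (ambZ k0 r))

/-- `K := F(Y) = ⋃ₙ Kₙ`. -/
def KfldU : Subfield (Amb k0 r) :=
  Subfield.closure (↑(FfldU k0 r) ∪ {ambY k0 r})

/-- The polynomial ring `F[Y]`. -/
def polyRingU : Subring (Amb k0 r) :=
  Subring.closure (↑(FfldU k0 r) ∪ {ambY k0 r})

/-- `V := F[Y]_{(Y)}`. -/
def VsetU : Set (Amb k0 r) :=
  {x | ∃ f ∈ polyRingU k0 r, ∃ g ∈ polyRingU k0 r,
    (¬ ∃ h ∈ polyRingU k0 r, g = ambY k0 r * h) ∧ x = f / g}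

/-- `M := Y·F[Y]_{(Y)} = ⋃ₙ Mₙ`. -/
def MsetU : Set (Amb k0 r) :=
  {x | ∃ v ∈ VsetU k0 r, x = ambY k0 r * v}

/-- `A := k + M = ⋃ₙ Aₙ`. -/
def AsetU : Set (Amb k0 r) :=
  {x | ∃ c ∈ kfldU k0 r, ∃ m ∈ MsetU k0 r, x = c + m}

/-- `X′ₙ := (1 + Y·Xₙ)/Y`. -/
def ambX' (n : ℕ) : Amb k0 r :=
  (1 + ambY k0 r * ambX k0 r n) / ambY k0 r

/-- `1` belongs to the ideal of `W` generated by the coefficients of `g`, where `W` is a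
subring (given as a subset `S`) of the ambient field. -/
def unitContent (S : Set (Amb k0 r)) (g : Polynomial (Amb k0 r)) : Prop :=
  ∃ (t : Finset ℕ) (u : ℕ → Amb k0 r), (∀ i ∈ t, u i ∈ S) ∧ ∑ i ∈ t, u i * g.coeff i = 1

/-- The Nagata ring `W(T)` of a subring `W ⊆ Amb k0 r` (given as a subset `S`) in the
"variable" `T`: all fractions `f(T)/g(T)` with `f, g ∈ W[T]` and the coefficients of `g`
generating the unit ideal of `W`.  (When `T` is transcendental over `W` this is the usual
Nagata ring.) -/
def nagataSet (S : Set (Amb k0 r)) (T : Amb k0 r) : Set (Amb k0 r) :=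
  {x | ∃ f g : Polynomial (Amb k0 r), (∀ i, f.coeff i ∈ S) ∧ (∀ i, g.coeff i ∈ S) ∧
    unitContent k0 r S g ∧ x = f.eval T / g.eval T}

/-- The valuation overrings of a ring `D` (given as a subset) inside a subfield `L` of the
ambient field: subrings `W` with `D ⊆ W ⊆ L` such that for every `x ∈ L`, `x ∈ W` or
`x⁻¹ ∈ W`. -/
def valOverringsIn (D : Set (Amb k0 r)) (L : Subfield (Amb k0 r)) : Set (Subring (Amb k0 r)) :=
  {W | D ⊆ ↑W ∧ (W : Set (Amb k0 r)) ⊆ (L : Set (Amb k0 r)) ∧ ∀ x ∈ L, x ∈ W ∨ x⁻¹ ∈ W}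

/-- The Kronecker function ring `Kr_{L(T)}(D, b) = ⋂ {W(T) : W a valuation overring of `D`
in `L`}`, realized as a subset of the ambient field. -/
def krSet (D : Set (Amb k0 r)) (L : Subfield (Amb k0 r)) (T : Amb k0 r) : Set (Amb k0 r) :=
  ⋂ W ∈ valOverringsIn k0 r D L, nagataSet k0 r (↑W) T

/-- The tower `Dₙ`: `D₁ := A₁` and `Dₙ := Bₙ ∩ Aₙ` for `n ≥ 2`, where
`Bₙ := Kr_{K_{n-1}(X′ₙ)}(D_{n-1}, b)`.  (The value at `0` is junk, set to `D₁`.) -/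
def Dset : ℕ → Set (Amb k0 r)
  | 0 => Aset k0 r 1
  | 1 => Aset k0 r 1
  | n + 2 => krSet k0 r (Dset (n + 1)) (Kfld k0 r (n + 1)) (ambX' k0 r (n + 2)) ∩ Aset k0 r (n + 2)

/-- `Bₙ := Kr_{K_{n-1}(X′ₙ)}(D_{n-1}, b)` (meaningful for `n ≥ 2`). -/
def Bset (n : ℕ) : Set (Amb k0 r) :=
  krSet k0 r (Dset k0 r (n - 1)) (Kfld k0 r (n - 1)) (ambX' k0 r n)

/-- `𝓜ₙ := Mₙ ∩ Dₙ`. -/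
def MMset (n : ℕ) : Set (Amb k0 r) := Mset k0 r n ∩ Dset k0 r n

/-- `D := ⋃__{n ≥ 1} Dₙ`. -/
def DsetU : Set (Amb k0 r) := ⋃ n, Dset k0 r n

/-- `𝓜 := ⋃_{n ≥ 2} 𝓜ₙ`. -/
def MMsetU : Set (Amb k0 r) := ⋃ n, MMset k0 r (n + 2)

/-- The localization `D_m = {a/b : a, b ∈ D, b ∉ m}` of a subring `D` of the ambient
field (given as a subset) at (the complement of) a subset `m`. -/
def locAt (D m : Set (Amb k0 r)) : Set (Amb k0 r) :=
  {x | ∃ a ∈ D, ∃ b ∈ D, b ∉ m ∧ x = a / b}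

/-- The quotient field, inside the ambient field, of a subring given as a subset. -/
def qfSet (D : Set (Amb k0 r)) : Set (Amb k0 r) :=
  {x | ∃ a ∈ D, ∃ b ∈ D, b ≠ 0 ∧ x = a / b}

/-- The nonunits of a subring of the ambient field, given as a subset: in a local
subring of a field these form the maximal ideal. -/
def nonunitsIn (S : Set (Amb k0 r)) : Set (Amb k0 r) :=
  {x | x ∈ S ∧ (x = 0 ∨ x⁻¹ ∉ S)}

/-- A subring `A` of the ambient field is a pseudo-valuation domain: it is local, and its
maximal ideal (= set of nonunits) is also the maximal ideal of some valuation overring of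
`A` in its quotient field. -/
def IsPVDSub (A : Subring (Amb k0 r)) : Prop :=
  IsLocalRing ↥A ∧
  ∃ W : Subring (Amb k0 r), (A : Set (Amb k0 r)) ⊆ ↑W ∧
    (W : Set (Amb k0 r)) ⊆ qfSet k0 r ↑A ∧
    (∀ x ∈ qfSet k0 r (A : Set (Amb k0 r)), x ∈ W ∨ x⁻¹ ∈ W) ∧
    nonunitsIn k0 r ↑A = nonunitsIn k0 r ↑W

/-- The valuative dimension of a subring of the ambient field: the supremum of the Krull
dimensions of its valuation overrings (in its quotient field). -/
def subValuativeDim (A : Subring (Amb k0 r)) : WithBot ℕ∞ :=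
  ⨆ W : {W : Subring (Amb k0 r) // (A : Set (Amb k0 r)) ⊆ ↑W ∧
      (W : Set (Amb k0 r)) ⊆ qfSet k0 r ↑A ∧
      ∀ x ∈ qfSet k0 r (A : Set (Amb k0 r)), x ∈ W ∨ x⁻¹ ∈ W},
    ringKrullDim ↥(W : Subring (Amb k0 r))


/-- `1` belongs to the ideal generated by the coefficients of a multivariable polynomial
`g` in the subring given by the subset `S`. -/
def mvUnitContent (S : Set (Amb k0 r)) (g : MvPolynomial ℕ (Amb k0 r)) : Prop :=
  ∃ (t : Finset (ℕ →₀ ℕ)) (u : (ℕ →₀ ℕ) → Amb k0 r),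
    (∀ m ∈ t, u m ∈ S) ∧ ∑ m ∈ t, u m * MvPolynomial.coeff m g = 1

/-- The Nagata ring `W(T₀, T₁, …)` of a subring `W` of the ambient field (given as a
subset `S`) in countably many "variables" `T j`: all fractions `f(T)/g(T)` with
`f, g ∈ W[T₀, T₁, …]` and the coefficients of `g` generating the unit ideal of `W`. -/
def nagataSetMv (S : Set (Amb k0 r)) (T : ℕ → Amb k0 r) : Set (Amb k0 r) :=
  {x | ∃ f g : MvPolynomial ℕ (Amb k0 r),
    (∀ m, MvPolynomial.coeff m f ∈ S) ∧ (∀ m, MvPolynomial.coeff m g ∈ S) ∧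
    mvUnitContent k0 r S g ∧ x = MvPolynomial.eval T f / MvPolynomial.eval T g}

/-- A subring `S` of the ambient field is an *essential* domain: `S` is the intersection
of a family of localizations `S_p` at primes `p ∈ Δ`, each of which is a valuation domain
(with quotient field the quotient field of `S`). -/
def IsEssentialSub (S : Subring (Amb k0 r)) : Prop :=
  ∃ Δ : Set (Ideal ↥S),
    (∀ p ∈ Δ, p.IsPrime) ∧
    (∀ p ∈ Δ, ∀ x ∈ qfSet k0 r (S : Set (Amb k0 r)),
      x ∈ locAt k0 r ↑S (Subtype.val '' (p : Set ↥S)) ∨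
      x⁻¹ ∈ locAt k0 r ↑S (Subtype.val '' (p : Set ↥S))) ∧
    (S : Set (Amb k0 r)) = ⋂ p ∈ Δ, locAt k0 r ↑S (Subtype.val '' (p : Set ↥S))

end

/-!
Put `τ = X′ₙ⁻¹ = Y / (1 + Y Xₙ)`. Nagata rings in the variable `X′ₙ` contain `X′ₙ` and `τ`, so `τ`
is a unit of `Bₙ`, while `τ ∈ 𝓜ₙ` because `τ` is divisible by `Y`. In fact `Bₙ = Dₙ[1/τ]`: every
`x ∈ Bₙ` has a pole of finite order at `Y = 0`, so `sᴺ x ∈ Mₙ ∩ Bₙ ⊆ Dₙ` for each `s ∈ 𝓜ₙ` and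
large `N`.

The ideal `𝓜ₙ` is maximal with residue field `kₙ`: given `c ∈ kₙ`, write `c = f(X′ₙ) / g(X′ₙ)`
with `f, g` over `K_{n-1}`. For `m > deg f` the fraction `c / (1 + c τᵐ)` is congruent to `c` modulo
`Mₙ`, and it belongs to `Bₙ` because, up to a power of `X′ₙ`, it equals `f(X′ₙ) / h(X′ₙ)` with
`h = Xᵐ g + f`, and every coefficient of `f` is also a coefficient of `h`.

Hence each prime `q ≠ 𝓜ₙ` misses some `s ∈ 𝓜ₙ`, which gives `Bₙ ⊆ (Dₙ)_q`. Conversely, an `x`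
lying in `(Dₙ)_q` for all `q` not containing `τ` lies in `Dₙ[1/τ] = Bₙ`.
-/

open Polynomial

section Localization

variable {R M : Type*} [CommRing R] [AddCommGroup M] [Module R M] (N : Submodule R M)

theorem exists_pow_smul_mem_of_forall_isPrime (a : R) (x : M)
    (h : ∀ q : Ideal R, q.IsPrime → a ∉ q → ∃ b ∉ q, b • x ∈ N) : ∃ n : ℕ, a ^ n • x ∈ N := by
  suffices ha : a ∈ (N.colon {x}).radical by
    obtain ⟨n, hn⟩ := ha
    exact ⟨n, Submodule.mem_colon_singleton.1 hn⟩
  rw [Ideal.radical_eq_sInf, Submodule.mem_sInf]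
  rintro q ⟨hcolon, hq⟩
  by_contra haq
  obtain ⟨b, hbq, hb⟩ := h q hq haq
  exact hbq (hcolon (Submodule.mem_colon_singleton.2 hb))

theorem exists_notMem_smul_mem_of_isPrime_ne {P q : Ideal R} [P.IsMaximal] (hq : q.IsPrime)
    (hne : q ≠ P) (x : M) (h : ∀ a ∈ P, ∃ n : ℕ, a ^ n • x ∈ N) : ∃ b ∉ q, b • x ∈ N := by
  have hPq : ¬ P ≤ q := fun hle => hne (Ideal.IsMaximal.eq_of_le ‹_› hq.ne_top hle).symm
  obtain ⟨a, haP, haq⟩ := SetLike.not_le_iff_exists.1 hPq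
  obtain ⟨n, hn⟩ := h a haP
  exact ⟨a ^ n, fun hmem => haq (hq.mem_of_pow_mem n hmem), hn⟩

end Localization

section FieldPlusIdeal

variable {V : Type*} [CommRing V]

theorem comap_isMaximal_of_forall_exists_sub_mem {R k : Type*} [CommRing R] [Field k] (φ : R →+* V)
    (ψ : k →+* V) {M : Ideal V} (hM : M ≠ ⊤) (hφ : ∀ d, ∃ c, φ d - ψ c ∈ M)
    (hψ : ∀ c, ∃ d, φ d - ψ c ∈ M) : (M.comap φ).IsMaximal := by
  rw [Ideal.isMaximal_iff]
  refine ⟨fun h => hM ((Ideal.eq_top_iff_one _).2 (by simpa using h)), fun J d hJ hd hdJ => ?_⟩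
  obtain ⟨c, hc⟩ := hφ d
  obtain ⟨b, hb⟩ := hψ c⁻¹
  have hc0 : c ≠ 0 := by
    rintro rfl
    exact hd (by simpa using hc)
  have hcc : ψ c * ψ c⁻¹ = 1 := by rw [← map_mul, mul_inv_cancel₀ hc0, map_one]
  have hdb : d * b - 1 ∈ M.comap φ := by
    have : φ (d * b - 1) = (φ d - ψ c) * φ b + ψ c * (φ b - ψ c⁻¹) := by
      rw [map_sub, map_mul, map_one]
      linear_combination hcc
    rw [Ideal.mem_comap, this]
    exact M.add_mem (M.mul_mem_right _ hc) (M.mul_mem_left _ hb)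
  simpa using J.sub_mem (J.mul_mem_right b hdJ) (hJ hdb)

/-- The subring `R + M` of `V`, for a subring `R` and an ideal `M` of `V`, encoded as the preimage
of the image of `R` in `V / M`. -/
def subringAddIdeal (R : Subring V) (M : Ideal V) : Subring V :=
  (R.map (Ideal.Quotient.mk M)).comap (Ideal.Quotient.mk M)

theorem mem_subringAddIdeal_iff {R : Subring V} {M : Ideal V} {v : V} :
    v ∈ subringAddIdeal R M ↔ ∃ c ∈ R, v - c ∈ M := by
  simp only [subringAddIdeal, Subring.mem_comap, Subring.mem_map]
  exact exists_congr fun c => and_congr_right fun _ => eq_comm.trans Ideal.Quotient.eq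

theorem mem_subringAddIdeal_of_mem {R : Subring V} {M : Ideal V} {v : V} (hv : v ∈ M) :
    v ∈ subringAddIdeal R M :=
  mem_subringAddIdeal_iff.2 ⟨0, R.zero_mem, by simpa using hv⟩

theorem exists_coe_eq_div_one_add {E : Type*} [Field E] {W : Subring E} {M : Ideal W}
    (hM : ∀ m ∈ M, IsUnit (1 + m)) (c : W) {m : W} (hm : m ∈ M) :
    ∃ b : W, (b : E) = c / (1 + m) ∧ b - c ∈ M := by
  obtain ⟨u, hu⟩ := (hM m hm).exists_right_inv
  have huE : (1 + m : E) * u = 1 := by simpa using congrArg W.subtype hu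
  refine ⟨c * u, ?_, ?_⟩
  · rw [Subring.coe_mul, div_eq_mul_inv, eq_inv_of_mul_eq_one_right huE]
  · have : c * u - c = -(c * u) * m := by linear_combination c * hu
    rw [this]
    exact M.mul_mem_left _ hm

end FieldPlusIdeal

section Adjoin

variable {E : Type*} [Field E] (L : Subfield E) (t x : E)

theorem mem_subringClosure_union_singleton_iff :
    x ∈ Subring.closure ((L : Set E) ∪ {t}) ↔ ∃ p : L[X], aeval t p = x := by
  have h := Algebra.adjoin_eq_ring_closure (R := L) {t}
  rw [show Set.range (algebraMap L E) = L from Subtype.range_coe] at h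
  rw [← h, Subalgebra.mem_toSubring, Algebra.adjoin_singleton_eq_range_aeval]
  rfl

theorem mem_subfieldClosure_union_singleton_iff :
    x ∈ Subfield.closure ((L : Set E) ∪ {t}) ↔ ∃ p q : L[X], x = aeval t p / aeval t q := by
  simp only [Subfield.mem_closure_iff, mem_subringClosure_union_singleton_iff]
  constructor
  · rintro ⟨_, ⟨p, rfl⟩, _, ⟨q, rfl⟩, rfl⟩
    exact ⟨p, q, rfl⟩
  · rintro ⟨p, q, rfl⟩
    exact ⟨_, ⟨p, rfl⟩, _, ⟨q, rfl⟩, rfl⟩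

end Adjoin

section LocalizationAtX

variable {F E : Type*} [Field F] [Field E] [Algebra F E] {t : E}

theorem ne_zero_of_transcendental (ht : Transcendental F t) : t ≠ 0 := by
  rintro rfl
  exact ht isAlgebraic_zero

theorem aeval_ne_zero_of_coeff_zero_ne_zero (ht : Transcendental F t) {q : F[X]}
    (hq : q.coeff 0 ≠ 0) : aeval t q ≠ 0 := fun h =>
  hq (by rw [transcendental_iff.1 ht q h, coeff_zero])

theorem exists_aeval_eq_mul_aeval_iff (ht : Transcendental F t) (q : F[X]) :
    (∃ p : F[X], aeval t q = t * aeval t p) ↔ q.coeff 0 = 0 := by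
  rw [← X_dvd_iff]
  refine exists_congr fun p => ?_
  rw [← (transcendental_iff_injective.1 ht).eq_iff, map_mul, aeval_X]

/-- The image `F[t]_{(t)}` in `E` of the local ring `F[X]_{(X)}`, for `t` transcendental over
`F`. -/
def localizationAtX (ht : Transcendental F t) : Subring E where
  carrier := {x | ∃ p q : F[X], q.coeff 0 ≠ 0 ∧ x = aeval t p / aeval t q}
  one_mem' := ⟨1, 1, by simp, by simp⟩
  zero_mem' := ⟨0, 1, by simp, by simp⟩
  mul_mem' := by
    rintro _ _ ⟨p, q, hq, rfl⟩ ⟨p', q', hq', rfl⟩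
    exact ⟨p * p', q * q', by simp [hq, hq'], by simp only [map_mul, div_mul_div_comm]⟩
  add_mem' := by
    rintro _ _ ⟨p, q, hq, rfl⟩ ⟨p', q', hq', rfl⟩
    refine ⟨p * q' + q * p', q * q', by simp [hq, hq'], ?_⟩
    rw [div_add_div _ _ (aeval_ne_zero_of_coeff_zero_ne_zero ht hq)
      (aeval_ne_zero_of_coeff_zero_ne_zero ht hq')]
    simp only [map_add, map_mul]
  neg_mem' := by
    rintro _ ⟨p, q, hq, rfl⟩
    exact ⟨-p, q, hq, by rw [map_neg, neg_div]⟩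

namespace localizationAtX

variable (ht : Transcendental F t)

theorem aeval_mem (p : F[X]) : aeval t p ∈ localizationAtX ht :=
  ⟨p, 1, by simp, by simp⟩

theorem algebraMap_mem (c : F) : algebraMap F E c ∈ localizationAtX ht := by
  simpa using aeval_mem ht (C c)

theorem self_mem : t ∈ localizationAtX ht := by
  simpa using aeval_mem ht (X : F[X])

theorem exists_pow_mul_mem (p q : F[X]) : ∃ n : ℕ, t ^ n * (aeval t p / aeval t q) ∈
    localizationAtX ht := by
  obtain rfl | hq := eq_or_ne q 0
  · exact ⟨0, by simp [zero_mem]⟩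
  have hfin : FiniteMultiplicity X q := by
    simpa using finiteMultiplicity_X_sub_C (0 : F) hq
  obtain ⟨h, hqh, hX⟩ := hfin.exists_eq_pow_mul_and_not_dvd
  rw [X_dvd_iff] at hX
  have hqt : aeval t q = t ^ multiplicity X q * aeval t h := by
    simpa using congrArg (aeval t) hqh
  refine ⟨multiplicity X q, p, h, hX, ?_⟩
  rw [hqt, ← mul_div_assoc, mul_div_mul_left _ _ (pow_ne_zero _ (ne_zero_of_transcendental ht))]

theorem isUnit_one_add_of_mem_span {m : localizationAtX ht}
    (hm : m ∈ Ideal.span {(⟨t, self_mem ht⟩ : localizationAtX ht)}) : IsUnit (1 + m) := by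
  obtain ⟨⟨_, p, q, hq, rfl⟩, rfl⟩ := Ideal.mem_span_singleton'.1 hm
  have hq' : (q + X * p).coeff 0 ≠ 0 := by simpa using hq
  have hne := aeval_ne_zero_of_coeff_zero_ne_zero ht hq
  have hne' := aeval_ne_zero_of_coeff_zero_ne_zero ht hq'
  refine IsUnit.of_mul_eq_one ⟨aeval t q / aeval t (q + X * p), q, q + X * p, hq', rfl⟩ ?_
  ext
  simp only [map_add, map_mul, aeval_X, Subring.coe_mul, Subring.coe_add, Subring.coe_one] at hne' ⊢
  rw [mul_comm _ t]
  field_simp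

end localizationAtX

end LocalizationAtX

section Content

variable {R : Type*} [CommRing R]

theorem exists_finsupp_sum_mul_coeff_eq {p : R[X]} {y : R} (hy : y ∈ p.contentIdeal) :
    ∃ c : ℕ →₀ R, (c.sum fun i a => a * p.coeff i) = y := by
  refine Finsupp.mem_ideal_span_range_iff_exists_finsupp.1 (Ideal.span_mono (fun z hz => ?_) hy)
  obtain ⟨i, -, rfl⟩ := mem_coeffs_iff.1 hz
  exact ⟨i, rfl⟩

theorem exists_coeff_div_mem_valuationSubring {L : Type*} [Field L] (V : ValuationSubring L)
    {g : L[X]} (hg : g ≠ 0) : ∃ i, g.coeff i ≠ 0 ∧ ∀ j, g.coeff j / g.coeff i ∈ V := by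
  obtain ⟨i, hi, hmax⟩ := g.support.exists_max_image (fun i => V.valuation (g.coeff i))
    (support_nonempty.2 hg)
  rw [mem_support_iff] at hi
  refine ⟨i, hi, fun j => ?_⟩
  by_cases hj : g.coeff j = 0
  · simp [hj]
  · rw [← V.valuation_le_one_iff, map_div₀]
    exact div_le_one_of_le₀ (hmax j (mem_support_iff.2 hj)) zero_le

end Content

section NagataRing

variable {k0 : Type} [Field k0] {r : ℕ}

theorem unitContent_map_subtype_iff (W : Subring (Amb k0 r)) (g : W[X]) :
    unitContent k0 r W (g.map W.subtype) ↔ g.contentIdeal = ⊤ := by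
  rw [Ideal.eq_top_iff_one]
  constructor
  · rintro ⟨s, u, hu, hsum⟩
    have h1 : (1 : W) = ∑ i ∈ s.attach, (⟨u i, hu i i.2⟩ : W) * g.coeff i := by
      ext
      rw [Subring.coe_one, ← hsum, ← Finset.sum_attach]
      simp
    rw [h1]
    exact Ideal.sum_mem _ fun i _ => Ideal.mul_mem_left _ _ (g.coeff_mem_contentIdeal _)
  · intro h
    obtain ⟨c, hc⟩ := exists_finsupp_sum_mul_coeff_eq h
    refine ⟨c.support, fun i => c i, fun i _ => (c i).2, ?_⟩
    simpa [Finsupp.sum] using congrArg W.subtype hc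

theorem mem_nagataSet_iff {W : Subring (Amb k0 r)} {T x : Amb k0 r} :
    x ∈ nagataSet k0 r W T ↔
      ∃ f g : W[X], g.contentIdeal = ⊤ ∧ x = aeval T f / aeval T g := by
  have eval_map_subtype (p : W[X]) : (p.map W.subtype).eval T = aeval T p :=
    eval_map_algebraMap p T
  constructor
  · rintro ⟨f, g, hf, hg, hu, rfl⟩
    have lift (p : (Amb k0 r)[X]) (hp : ∀ i, p.coeff i ∈ (W : Set (Amb k0 r))) :
        ∃ q : W[X], q.map W.subtype = p :=
      (mem_lifts _).1 ((lifts_iff_coeff_lifts _).2 fun i => ⟨⟨_, hp i⟩, rfl⟩)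
    obtain ⟨f, rfl⟩ := lift f hf
    obtain ⟨g, rfl⟩ := lift g hg
    exact ⟨f, g, (unitContent_map_subtype_iff W g).1 hu, by simp only [eval_map_subtype]⟩
  · rintro ⟨f, g, hg, rfl⟩
    exact ⟨f.map W.subtype, g.map W.subtype, fun i => by simp, fun i => by simp,
      (unitContent_map_subtype_iff W g).2 hg, by simp only [eval_map_subtype]⟩

/-- The Nagata ring `W(T)` as a subring of the ambient field. It is closed under addition even if
`T` is algebraic over `W`, because a fraction with vanishing denominator is `0`. -/
def nagataSubring (W : Subring (Amb k0 r)) (T : Amb k0 r) : Subring (Amb k0 r) where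
  carrier := nagataSet k0 r W T
  one_mem' := mem_nagataSet_iff.2 ⟨1, 1, contentIdeal_one, by simp⟩
  zero_mem' := mem_nagataSet_iff.2 ⟨0, 1, contentIdeal_one, by simp⟩
  mul_mem' := by
    simp only [mem_nagataSet_iff]
    rintro _ _ ⟨f, g, hg, rfl⟩ ⟨f', g', hg', rfl⟩
    exact ⟨f * f', g * g', contentIdeal_mul_eq_top_of_contentIdeal_eq_top hg hg',
      by simp only [map_mul, div_mul_div_comm]⟩
  add_mem' := by
    simp only [mem_nagataSet_iff]
    rintro _ _ ⟨f, g, hg, rfl⟩ ⟨f', g', hg', rfl⟩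
    by_cases h : aeval T g = 0
    · exact ⟨f', g', hg', by simp [h]⟩
    by_cases h' : aeval T g' = 0
    · exact ⟨f, g, hg, by simp [h']⟩
    exact ⟨f * g' + g * f', g * g', contentIdeal_mul_eq_top_of_contentIdeal_eq_top hg hg',
      by simp only [map_add, map_mul, div_add_div _ _ h h']⟩
  neg_mem' := by
    simp only [mem_nagataSet_iff]
    rintro _ ⟨f, g, hg, rfl⟩
    exact ⟨-f, g, hg, by rw [map_neg, neg_div]⟩

variable (W : Subring (Amb k0 r)) (T : Amb k0 r)

theorem self_mem_nagataSubring : T ∈ nagataSubring W T :=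
  mem_nagataSet_iff.2 ⟨X, 1, contentIdeal_one, by simp⟩

theorem inv_mem_nagataSubring : T⁻¹ ∈ nagataSubring W T :=
  mem_nagataSet_iff.2 ⟨1, X, by rw [← monomial_one_one_eq_X, contentIdeal_monomial,
    Ideal.span_singleton_one], by simp⟩

variable {W T} {L : Subfield (Amb k0 r)}

-- Dividing by a coefficient of `g` of maximal value makes all coefficients lie in `W`.
theorem aeval_div_aeval_mem_nagataSubring (hW : ∀ x ∈ L, x ∈ W ∨ x⁻¹ ∈ W) {f g : L[X]}
    (hfg : f.coeffs ⊆ g.coeffs) : aeval T f / aeval T g ∈ nagataSubring W T := by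
  obtain rfl | hg := eq_or_ne g 0
  · simp [zero_mem]
  let V : ValuationSubring L :=
    { W.comap L.subtype with mem_or_inv_mem' := fun x => hW x x.2 }
  obtain ⟨i, hi, hgV⟩ := exists_coeff_div_mem_valuationSubring V hg
  have hfV (j : ℕ) : f.coeff j / g.coeff i ∈ V := by
    by_cases hj : f.coeff j = 0
    · simp [hj, zero_mem]
    · obtain ⟨l, -, hl⟩ := mem_coeffs_iff.1 (hfg (coeff_mem_coeffs hj))
      exact hl ▸ hgV l
  refine ⟨(C (g.coeff i)⁻¹ * f).map (algebraMap L _), (C (g.coeff i)⁻¹ * g).map (algebraMap L _),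
    fun j => ?_, fun j => ?_, ⟨{i}, 1, fun _ _ => W.one_mem, by simp [hi]⟩, ?_⟩
  · rw [coeff_map, coeff_C_mul, inv_mul_eq_div]
    exact hfV j
  · rw [coeff_map, coeff_C_mul, inv_mul_eq_div]
    exact hgV j
  · have hiE : aeval T (C (g.coeff i)⁻¹) ≠ 0 := by simpa using hi
    rw [eval_map_algebraMap, eval_map_algebraMap, map_mul, map_mul, mul_div_mul_left _ _ hiE]

theorem div_one_add_mul_inv_pow_mem_nagataSubring (hW : ∀ x ∈ L, x ∈ W ∨ x⁻¹ ∈ W) {c : Amb k0 r}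
    (hT : T ≠ 0) {f g : L[X]} (hc : c = aeval T f / aeval T g) {m : ℕ} (hm : f.natDegree < m) :
    c / (1 + c * T⁻¹ ^ m) ∈ nagataSubring W T := by
  by_cases hg : aeval T g = 0
  · simp [hc, hg, zero_mem]
  have hcoeffs : f.coeffs ⊆ (g * X ^ m + f).coeffs := by
    intro a ha
    obtain ⟨i, hi, rfl⟩ := mem_coeffs_iff.1 ha
    have him : i < m := (le_natDegree_of_mem_supp i hi).trans_lt hm
    have hcoeff : (g * X ^ m + f).coeff i = f.coeff i := by
      rw [coeff_add, coeff_mul_X_pow', if_neg him.not_ge, zero_add]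
    rw [← hcoeff]
    exact coeff_mem_coeffs (hcoeff ▸ mem_support_iff.1 hi)
  have hfrac : c / (1 + c * T⁻¹ ^ m) = T ^ m * (aeval T f / aeval T (g * X ^ m + f)) := by
    have hden : 1 + c * T⁻¹ ^ m = aeval T (g * X ^ m + f) / (aeval T g * T ^ m) := by
      simp only [hc, map_add, map_mul, map_pow, aeval_X, inv_pow]
      field_simp
    rw [hden, hc]
    field_simp
  rw [hfrac]
  exact mul_mem (pow_mem (self_mem_nagataSubring W T) m)
    (aeval_div_aeval_mem_nagataSubring hW hcoeffs)

/-- The Kronecker function ring `Kr_{L(T)}(D, b)` as a subring of the ambient field. -/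
noncomputable def krSubring (D : Set (Amb k0 r)) (L : Subfield (Amb k0 r)) (T : Amb k0 r) :
    Subring (Amb k0 r) :=
  ⨅ W ∈ valOverringsIn k0 r D L, nagataSubring W T

variable {D : Set (Amb k0 r)}

theorem coe_krSubring : (krSubring D L T : Set (Amb k0 r)) = krSet k0 r D L T := by
  simp only [krSubring, Subring.coe_iInf]
  rfl

theorem mem_krSubring_iff {x : Amb k0 r} :
    x ∈ krSubring D L T ↔ ∀ W ∈ valOverringsIn k0 r D L, x ∈ nagataSubring W T := by
  simp only [krSubring, Subring.mem_iInf]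

variable (D T)

theorem self_mem_krSubring : T ∈ krSubring D L T :=
  mem_krSubring_iff.2 fun W _ => self_mem_nagataSubring W T

theorem inv_mem_krSubring : T⁻¹ ∈ krSubring D L T :=
  mem_krSubring_iff.2 fun W _ => inv_mem_nagataSubring W T

variable {D T}

theorem mem_closure_of_mem_krSubring (hD : D ⊆ L) {x : Amb k0 r} (hx : x ∈ krSubring D L T) :
    x ∈ Subfield.closure ((L : Set (Amb k0 r)) ∪ {T}) := by
  have hL : L.toSubring ∈ valOverringsIn k0 r D L := ⟨hD, subset_rfl, fun y hy => Or.inl hy⟩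
  obtain ⟨f, g, -, rfl⟩ := mem_nagataSet_iff.1 (mem_krSubring_iff.1 hx _ hL)
  exact (mem_subfieldClosure_union_singleton_iff L T _).2 ⟨f, g, rfl⟩

theorem exists_div_one_add_mul_inv_pow_mem_krSubring (hT : T ≠ 0) {c : Amb k0 r}
    (hc : c ∈ Subfield.closure ((L : Set (Amb k0 r)) ∪ {T})) :
    ∃ m ≠ 0, c / (1 + c * T⁻¹ ^ m) ∈ krSubring D L T := by
  obtain ⟨f, g, hfg⟩ := (mem_subfieldClosure_union_singleton_iff L T c).1 hc
  exact ⟨f.natDegree + 1, by simp, mem_krSubring_iff.2 fun W hW =>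
    div_one_add_mul_inv_pow_mem_nagataSubring hW.2.2 hT hfg (Nat.lt_succ_self _)⟩

end NagataRing

section Fields

/-- The indeterminate `i` as an element of the rational function field `k(σ)`. -/
noncomputable def fractionRingX (k : Type*) {σ : Type*} [Field k] (i : σ) :
    FractionRing (MvPolynomial σ k) :=
  algebraMap (MvPolynomial σ k) _ (MvPolynomial.X i)

theorem transcendental_adjoin_fractionRingX_compl (k : Type*) {σ : Type*} [Field k] (i : σ) :
    Transcendental (IntermediateField.adjoin k (fractionRingX k '' {i}ᶜ))
      (fractionRingX k i) := by
  have hindep : AlgebraicIndependent k (fractionRingX k (σ := σ)) :=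
    (MvPolynomial.algebraicIndependent_X σ k).map'
      (f := IsScalarTower.toAlgHom k (MvPolynomial σ k) (FractionRing (MvPolynomial σ k)))
      (IsFractionRing.injective _ _)
  exact fun halg => hindep.transcendental_adjoin (s := {i}ᶜ) (by simp)
    (IntermediateField.isAlgebraic_adjoin_iff.1 halg)

variable (k0 : Type) [Field k0] (r n : ℕ)

theorem kfld_le_Ffld : kfld k0 r n ≤ Ffld k0 r n :=
  Set.subset_union_left.trans Subfield.subset_closure

theorem Ffld_le_Kfld : Ffld k0 r n ≤ Kfld k0 r n :=
  Set.subset_union_left.trans Subfield.subset_closure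

theorem ambY_mem_Kfld : ambY k0 r ∈ Kfld k0 r n :=
  Subfield.subset_closure (Or.inr rfl)

variable {n} in
theorem ambX_mem_kfld {i : ℕ} (hi : 1 ≤ i) (hin : i ≤ n) : ambX k0 r i ∈ kfld k0 r n :=
  Subfield.subset_closure (Or.inr ⟨i, hi, hin, rfl⟩)

theorem Ffld_le_adjoin_fractionRingX_compl :
    Ffld k0 r n ≤ (IntermediateField.adjoin k0
      (fractionRingX k0 '' ({Sum.inr (Sum.inl ())}ᶜ : Set (TowerVars r)))).toSubfield := by
  rw [Ffld, Subfield.closure_le, Set.union_subset_iff]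
  constructor
  · change kfld k0 r n ≤ _
    rw [kfld, Subfield.closure_le]
    rintro _ (⟨c, rfl⟩ | ⟨i, -, -, rfl⟩)
    · exact IntermediateField.algebraMap_mem _ c
    · exact IntermediateField.subset_adjoin _ _ ⟨Sum.inl i, by simp, rfl⟩
  · rintro _ ⟨i, rfl⟩
    exact IntermediateField.subset_adjoin _ _ ⟨Sum.inr (Sum.inr i), by simp, rfl⟩

theorem transcendental_ambY : Transcendental (Ffld k0 r n) (ambY k0 r) :=
  .of_ringHom_of_comp_eq (f := Subfield.inclusion (Ffld_le_adjoin_fractionRingX_compl k0 r n))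
    (g := RingHom.id _)
    (transcendental_adjoin_fractionRingX_compl k0 (Sum.inr (Sum.inl ()) : TowerVars r))
    (RingHom.injective _) rfl

theorem ambY_ne_zero : ambY k0 r ≠ 0 :=
  ne_zero_of_transcendental (transcendental_ambY k0 r 0)

theorem ambX'_eq : ambX' k0 r n = (ambY k0 r)⁻¹ + ambX k0 r n := by
  rw [ambX']
  field_simp [ambY_ne_zero k0 r]

theorem kfld_mono : Monotone (kfld k0 r) := fun _ _ hmn =>
  Subfield.closure_mono <| Set.union_subset_union_right _ fun _ ⟨i, hi, him, hx⟩ =>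
    ⟨i, hi, him.trans hmn, hx⟩

theorem Ffld_mono : Monotone (Ffld k0 r) := fun _ _ hmn =>
  Subfield.closure_mono (Set.union_subset_union_left _ (kfld_mono k0 r hmn))

theorem Kfld_mono : Monotone (Kfld k0 r) := fun _ _ hmn =>
  Subfield.closure_mono (Set.union_subset_union_left _ (Ffld_mono k0 r hmn))

theorem Kfld_succ_eq_closure : Kfld k0 r (n + 1) =
    Subfield.closure ((Kfld k0 r n : Set (Amb k0 r)) ∪ {ambX' k0 r (n + 1)}) := by
  apply le_antisymm
  · set L := Subfield.closure ((Kfld k0 r n : Set (Amb k0 r)) ∪ {ambX' k0 r (n + 1)})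
    have hK : Kfld k0 r n ≤ L := Set.subset_union_left.trans Subfield.subset_closure
    have hX : ambX k0 r (n + 1) ∈ L := by
      rw [← sub_eq_of_eq_add' (ambX'_eq k0 r (n + 1))]
      exact sub_mem (Subfield.subset_closure (Or.inr rfl)) (inv_mem (hK (ambY_mem_Kfld k0 r n)))
    have hk : kfld k0 r (n + 1) ≤ L := by
      rw [kfld, Subfield.closure_le]
      rintro x (hx | ⟨i, hi, hin, rfl⟩)
      · exact hK (Ffld_le_Kfld k0 r n (kfld_le_Ffld k0 r n (Subfield.subset_closure (Or.inl hx))))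
      · obtain hin | rfl := Nat.le_succ_iff.1 hin
        · exact hK (Ffld_le_Kfld k0 r n (kfld_le_Ffld k0 r n (ambX_mem_kfld k0 r hi hin)))
        · exact hX
    have hF : Ffld k0 r (n + 1) ≤ L := by
      rw [Ffld, Subfield.closure_le]
      exact Set.union_subset hk fun z hz =>
        hK (Ffld_le_Kfld k0 r n (Subfield.subset_closure (Or.inr hz)))
    rw [Kfld, Subfield.closure_le]
    exact Set.union_subset hF (Set.singleton_subset_iff.2 (hK (ambY_mem_Kfld k0 r n)))
  · rw [Subfield.closure_le]
    refine Set.union_subset (Kfld_mono k0 r n.le_succ) (Set.singleton_subset_iff.2 ?_)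
    rw [ambX'_eq]
    exact add_mem (inv_mem (ambY_mem_Kfld k0 r _)) (Ffld_le_Kfld k0 r _
      (kfld_le_Ffld k0 r _ (ambX_mem_kfld k0 r n.succ_pos le_rfl)))

end Fields

section Rings

variable (k0 : Type) [Field k0] (r n : ℕ)

/-- `Vₙ` as a subring of the ambient field. -/
noncomputable def Vring : Subring (Amb k0 r) := localizationAtX (transcendental_ambY k0 r n)

theorem coe_Vring : (Vring k0 r n : Set (Amb k0 r)) = Vset k0 r n := by
  have mem_polyRing (x : Amb k0 r) :
      x ∈ polyRing k0 r n ↔ ∃ p : (Ffld k0 r n)[X], aeval (ambY k0 r) p = x :=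
    mem_subringClosure_union_singleton_iff _ _ _
  ext x
  constructor
  · rintro ⟨p, q, hq, rfl⟩
    refine ⟨_, (mem_polyRing _).2 ⟨p, rfl⟩, _, (mem_polyRing _).2 ⟨q, rfl⟩, ?_, rfl⟩
    rintro ⟨_, hh, hqh⟩
    obtain ⟨h, rfl⟩ := (mem_polyRing _).1 hh
    exact hq ((exists_aeval_eq_mul_aeval_iff (transcendental_ambY k0 r n) q).1 ⟨h, hqh⟩)
  · rintro ⟨_, hf, _, hg, hgY, rfl⟩
    obtain ⟨p, rfl⟩ := (mem_polyRing _).1 hf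
    obtain ⟨q, rfl⟩ := (mem_polyRing _).1 hg
    refine ⟨p, q, fun hq => hgY ?_, rfl⟩
    obtain ⟨h, hqh⟩ := (exists_aeval_eq_mul_aeval_iff (transcendental_ambY k0 r n) q).2 hq
    exact ⟨_, (mem_polyRing _).2 ⟨h, rfl⟩, hqh⟩

/-- `Mₙ` as an ideal of `Vₙ`. -/
noncomputable def Mideal : Ideal (Vring k0 r n) :=
  Ideal.span {⟨ambY k0 r, localizationAtX.self_mem (transcendental_ambY k0 r n)⟩}

variable {k0 r n}

theorem isUnit_one_add_of_mem_Mideal {m : Vring k0 r n} (hm : m ∈ Mideal k0 r n) :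
    IsUnit (1 + m) :=
  localizationAtX.isUnit_one_add_of_mem_span (transcendental_ambY k0 r n) hm

theorem Mideal_ne_top : Mideal k0 r n ≠ ⊤ := fun h => by
  have hneg : (-1 : Vring k0 r n) ∈ Mideal k0 r n := h ▸ Submodule.mem_top
  simpa using isUnit_one_add_of_mem_Mideal hneg

theorem mem_Mset_iff {x : Amb k0 r} :
    x ∈ Mset k0 r n ↔ ∃ v ∈ Mideal k0 r n, (v : Amb k0 r) = x := by
  simp only [Mset, ← coe_Vring]
  constructor
  · rintro ⟨v, hv, rfl⟩
    exact ⟨_, Ideal.mul_mem_right ⟨v, hv⟩ _ (Ideal.mem_span_singleton_self _), rfl⟩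
  · rintro ⟨_, hv, rfl⟩
    obtain ⟨w, rfl⟩ := Ideal.mem_span_singleton.1 hv
    exact ⟨w, w.2, rfl⟩

theorem coe_mem_Mset_iff {v : Vring k0 r n} :
    (v : Amb k0 r) ∈ Mset k0 r n ↔ v ∈ Mideal k0 r n := by
  simp [mem_Mset_iff]

theorem exists_ambX'_eq_aeval_div (hn : 1 ≤ n) : ∃ q : (Ffld k0 r n)[X], q.coeff 0 ≠ 0 ∧
    ambX' k0 r n = aeval (ambY k0 r) q / ambY k0 r := by
  let x : Ffld k0 r n := ⟨ambX k0 r n, kfld_le_Ffld k0 r n (ambX_mem_kfld k0 r hn le_rfl)⟩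
  have hx : algebraMap (Ffld k0 r n) (Amb k0 r) x = ambX k0 r n := rfl
  refine ⟨1 + X * C x, by simp, ?_⟩
  simp only [ambX', map_add, map_one, map_mul, aeval_X, aeval_C, hx]

theorem ambX'_ne_zero (hn : 1 ≤ n) : ambX' k0 r n ≠ 0 := by
  obtain ⟨q, hq, hX'⟩ := exists_ambX'_eq_aeval_div (k0 := k0) (r := r) hn
  rw [hX']
  exact div_ne_zero (aeval_ne_zero_of_coeff_zero_ne_zero (transcendental_ambY k0 r n) hq)
    (ambY_ne_zero k0 r)

theorem inv_ambX'_mem_Mset (hn : 1 ≤ n) : (ambX' k0 r n)⁻¹ ∈ Mset k0 r n := by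
  obtain ⟨q, hq, hX'⟩ := exists_ambX'_eq_aeval_div (k0 := k0) (r := r) hn
  refine ⟨aeval (ambY k0 r) (1 : (Ffld k0 r n)[X]) / aeval (ambY k0 r) q, ?_, ?_⟩
  · rw [← coe_Vring]
    exact ⟨1, q, hq, rfl⟩
  · rw [hX', inv_div, map_one, mul_one_div]

theorem exists_pow_mul_mem_Mset {s x : Amb k0 r} (hs : s ∈ Mset k0 r n) (hx : x ∈ Kfld k0 r n) :
    ∃ N : ℕ, s ^ N * x ∈ Mset k0 r n := by
  obtain ⟨p, q, rfl⟩ := (mem_subfieldClosure_union_singleton_iff _ _ _).1 hx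
  obtain ⟨N, hN⟩ := localizationAtX.exists_pow_mul_mem (transcendental_ambY k0 r n) p q
  obtain ⟨v, hv, rfl⟩ := hs
  rw [← coe_Vring] at hv
  refine ⟨N + 1, v ^ (N + 1) * (ambY k0 r ^ N * (aeval (ambY k0 r) p / aeval (ambY k0 r) q)), ?_,
    by ring⟩
  rw [← coe_Vring]
  exact mul_mem (pow_mem hv _) hN

variable (k0 r n)

/-- The inclusion `kₙ → Vₙ`. -/
noncomputable def kfldToVring : kfld k0 r n →+* Vring k0 r n :=
  (kfld k0 r n).subtype.codRestrict _ fun c =>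
    localizationAtX.algebraMap_mem (transcendental_ambY k0 r n) ⟨c, kfld_le_Ffld k0 r n c.2⟩

/-- `Aₙ = kₙ + Mₙ` as a subring of the ambient field. -/
noncomputable def Aring : Subring (Amb k0 r) :=
  (subringAddIdeal (kfldToVring k0 r n).range (Mideal k0 r n)).map (Vring k0 r n).subtype

theorem Aring_le_Vring : Aring k0 r n ≤ Vring k0 r n := by
  rintro _ ⟨v, -, rfl⟩
  exact v.2

variable {k0 r n}

theorem coe_mem_Aring_iff {v : Vring k0 r n} :
    (v : Amb k0 r) ∈ Aring k0 r n ↔ ∃ c, v - kfldToVring k0 r n c ∈ Mideal k0 r n := by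
  constructor
  · rintro ⟨w, hw, hwv⟩
    obtain rfl := Subtype.coe_injective hwv
    obtain ⟨_, ⟨c, rfl⟩, hc⟩ := mem_subringAddIdeal_iff.1 hw
    exact ⟨c, hc⟩
  · rintro ⟨c, hc⟩
    exact ⟨v, mem_subringAddIdeal_iff.2 ⟨_, ⟨c, rfl⟩, hc⟩, rfl⟩

theorem coe_Aring : (Aring k0 r n : Set (Amb k0 r)) = Aset k0 r n := by
  ext x
  constructor
  · intro hx
    lift x to Vring k0 r n using Aring_le_Vring k0 r n hx
    obtain ⟨c, hc⟩ := coe_mem_Aring_iff.1 hx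
    exact ⟨c, c.2, _, coe_mem_Mset_iff.2 hc, (add_sub_cancel _ _).symm⟩
  · rintro ⟨c, hc, m, hm, rfl⟩
    obtain ⟨m, hm, rfl⟩ := mem_Mset_iff.1 hm
    exact coe_mem_Aring_iff (v := kfldToVring k0 r n ⟨c, hc⟩ + m).2
      ⟨⟨c, hc⟩, by rwa [add_sub_cancel_left]⟩

theorem Mset_subset_Aring : Mset k0 r n ⊆ Aring k0 r n := fun x hx => by
  obtain ⟨m, hm, rfl⟩ := mem_Mset_iff.1 hx
  exact ⟨m, mem_subringAddIdeal_of_mem hm, rfl⟩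

theorem Aset_subset_Kfld : Aset k0 r n ⊆ Kfld k0 r n := by
  rw [← coe_Aring]
  intro x hx
  obtain ⟨p, q, -, rfl⟩ := Aring_le_Vring k0 r n hx
  exact (mem_subfieldClosure_union_singleton_iff _ _ _).2 ⟨p, q, rfl⟩

theorem Dset_subset_Kfld (hn : 1 ≤ n) : Dset k0 r n ⊆ Kfld k0 r n := by
  obtain _ | _ | n := n
  · simp at hn
  · exact Aset_subset_Kfld
  · exact Set.inter_subset_right.trans Aset_subset_Kfld

end Rings

section Tower

variable (k0 : Type) [Field k0] (r n : ℕ)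

/-- `Bₙ` as a subring of the ambient field, for `2 ≤ n`. -/
noncomputable def Bring : Subring (Amb k0 r) :=
  krSubring (Dset k0 r (n - 1)) (Kfld k0 r (n - 1)) (ambX' k0 r n)

/-- `Dₙ = Bₙ ∩ Aₙ` as a subring of the ambient field, for `2 ≤ n`. -/
noncomputable def Dring : Subring (Amb k0 r) := Bring k0 r n ⊓ Aring k0 r n

theorem Dring_le_Vring : Dring k0 r n ≤ Vring k0 r n :=
  inf_le_right.trans (Aring_le_Vring k0 r n)

/-- `𝓜ₙ` as an ideal of `Dₙ`, for `2 ≤ n`. -/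
noncomputable def MMideal : Ideal (Dring k0 r n) :=
  (Mideal k0 r n).comap (Subring.inclusion (Dring_le_Vring k0 r n))

variable {k0 r n}

theorem coe_Bring : (Bring k0 r n : Set (Amb k0 r)) = Bset k0 r n :=
  coe_krSubring

theorem coe_Dring (hn : 2 ≤ n) : (Dring k0 r n : Set (Amb k0 r)) = Dset k0 r n := by
  obtain ⟨n, rfl⟩ := Nat.exists_eq_add_of_le' hn
  rw [Dring, Subring.coe_inf, coe_Bring, coe_Aring]
  rfl

theorem mem_MMideal_iff {d : Dring k0 r n} : d ∈ MMideal k0 r n ↔ (d : Amb k0 r) ∈ Mset k0 r n :=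
  coe_mem_Mset_iff.symm

theorem image_val_eq_MMset_iff (hn : 2 ≤ n) {q : Ideal (Dring k0 r n)} :
    Subtype.val '' (q : Set (Dring k0 r n)) = MMset k0 r n ↔ q = MMideal k0 r n := by
  have hMM : MMset k0 r n = Subtype.val '' (MMideal k0 r n : Set (Dring k0 r n)) := by
    rw [MMset, Set.inter_comm, ← coe_Dring hn, ← Subtype.image_preimage_coe]
    exact congrArg (Subtype.val '' ·) (Set.ext fun _ => mem_MMideal_iff.symm)
  rw [hMM, Subtype.coe_injective.image_injective.eq_iff, SetLike.coe_set_eq]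

theorem Kfld_eq_closure (hn : 1 ≤ n) : Kfld k0 r n =
    Subfield.closure ((Kfld k0 r (n - 1) : Set (Amb k0 r)) ∪ {ambX' k0 r n}) := by
  obtain ⟨n, rfl⟩ := Nat.exists_eq_add_of_le' hn
  exact Kfld_succ_eq_closure k0 r n

theorem Bring_le_Kfld (hn : 2 ≤ n) : Bring k0 r n ≤ (Kfld k0 r n).toSubring := fun x hx => by
  rw [Subfield.mem_toSubring, Kfld_eq_closure (by omega)]
  exact mem_closure_of_mem_krSubring (Dset_subset_Kfld (by omega)) hx

theorem exists_mem_Bring_sub_mem_Mideal (hn : 1 ≤ n) (c : kfld k0 r n) :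
    ∃ b : Vring k0 r n, (b : Amb k0 r) ∈ Bring k0 r n ∧
      b - kfldToVring k0 r n c ∈ Mideal k0 r n := by
  have hcK : (c : Amb k0 r) ∈ Kfld k0 r n := Ffld_le_Kfld k0 r n (kfld_le_Ffld k0 r n c.2)
  obtain ⟨τ, hτ, hτX⟩ := mem_Mset_iff.1 (inv_ambX'_mem_Mset (k0 := k0) (r := r) hn)
  rw [Kfld_eq_closure hn] at hcK
  obtain ⟨m, hm, hmem⟩ := exists_div_one_add_mul_inv_pow_mem_krSubring
    (D := Dset k0 r (n - 1)) (ambX'_ne_zero hn) hcK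
  obtain ⟨b, hb, hbc⟩ := exists_coe_eq_div_one_add (fun _ => isUnit_one_add_of_mem_Mideal)
    (kfldToVring k0 r n c) (Ideal.mul_mem_left _ (kfldToVring k0 r n c)
      (Ideal.pow_mem_of_mem _ hτ m (Nat.pos_of_ne_zero hm)))
  refine ⟨b, ?_, hbc⟩
  rw [hb, Subring.coe_mul, Subring.coe_pow, hτX]
  exact hmem

theorem MMideal_isMaximal (hn : 1 ≤ n) : (MMideal k0 r n).IsMaximal := by
  refine comap_isMaximal_of_forall_exists_sub_mem _ (kfldToVring k0 r n) Mideal_ne_top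
    (fun d => coe_mem_Aring_iff.1 d.2.2) fun c => ?_
  obtain ⟨b, hbB, hbc⟩ := exists_mem_Bring_sub_mem_Mideal hn c
  exact ⟨⟨b, hbB, coe_mem_Aring_iff.2 ⟨c, hbc⟩⟩, hbc⟩

theorem exists_mem_MMideal_coe_eq_inv_ambX' (hn : 1 ≤ n) :
    ∃ τ ∈ MMideal k0 r n, (τ : Amb k0 r) = (ambX' k0 r n)⁻¹ :=
  have hM := inv_ambX'_mem_Mset (k0 := k0) (r := r) hn
  ⟨⟨_, inv_mem_krSubring _ _, Mset_subset_Aring hM⟩, mem_MMideal_iff.2 hM, rfl⟩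

theorem exists_pow_smul_mem_one_of_mem_Bring (hn : 2 ≤ n) {x : Amb k0 r} (hx : x ∈ Bring k0 r n)
    {s : Dring k0 r n} (hs : s ∈ MMideal k0 r n) :
    ∃ N : ℕ, s ^ N • x ∈ (1 : Submodule (Dring k0 r n) (Amb k0 r)) := by
  obtain ⟨N, hN⟩ := exists_pow_mul_mem_Mset (mem_MMideal_iff.1 hs) (Bring_le_Kfld hn hx)
  exact ⟨N, Submodule.mem_one.2
    ⟨⟨_, mul_mem (pow_mem s.2.1 N) hx, Mset_subset_Aring hN⟩, rfl⟩⟩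

theorem mem_Bring_of_pow_smul_mem_one (hn : 1 ≤ n) {τ : Dring k0 r n}
    (hτ : (τ : Amb k0 r) = (ambX' k0 r n)⁻¹) {x : Amb k0 r} {N : ℕ}
    (hx : τ ^ N • x ∈ (1 : Submodule (Dring k0 r n) (Amb k0 r))) : x ∈ Bring k0 r n := by
  obtain ⟨d, hd⟩ := Submodule.mem_one.1 hx
  have hxd : x = ambX' k0 r n ^ N * d := by
    change (d : Amb k0 r) = τ ^ N * x at hd
    rw [hd, hτ, inv_pow, mul_inv_cancel_left₀ (pow_ne_zero N (ambX'_ne_zero hn))]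
  rw [hxd]
  exact mul_mem (pow_mem (self_mem_krSubring _ _) N) d.2.1

theorem mem_locAt_iff {D : Subring (Amb k0 r)} {q : Ideal D} {x : Amb k0 r} :
    x ∈ locAt k0 r D (Subtype.val '' (q : Set D)) ↔
      ∃ b ∉ q, b • x ∈ (1 : Submodule D (Amb k0 r)) := by
  have coe_ne_zero {b : D} (hb : b ∉ q) : (b : Amb k0 r) ≠ 0 := fun h =>
    hb ((Subtype.ext h : b = 0) ▸ q.zero_mem)
  constructor
  · rintro ⟨a, ha, b, hb, hbq, rfl⟩
    have hbq' : (⟨b, hb⟩ : D) ∉ q := fun h => hbq ⟨_, h, rfl⟩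
    exact ⟨⟨b, hb⟩, hbq', Submodule.mem_one.2
      ⟨⟨a, ha⟩, (mul_div_cancel₀ a (coe_ne_zero hbq')).symm⟩⟩
  · rintro ⟨b, hbq, hbx⟩
    obtain ⟨a, ha⟩ := Submodule.mem_one.1 hbx
    exact ⟨a, a.2, b, b.2, by simpa using hbq,
      eq_div_of_mul_eq (coe_ne_zero hbq) ((mul_comm _ _).trans ha.symm)⟩

end Tower

/-- In the tower construction, for every `n ≥ 2`,
`Bₙ = ⋂ {(Dₙ)_q : q ∈ Spec(Dₙ), q ≠ 𝓜ₙ}`, the intersection taken inside the quotient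
field. -/
theorem tower_B_eq_iInter_localizations
    (k0 : Type) [Field k0] (r : ℕ) (hr : 2 ≤ r) (n : ℕ) (hn : 2 ≤ n) :
    ∀ D' : Subring (Amb k0 r), (D' : Set (Amb k0 r)) = Dset k0 r n →
      Bset k0 r n =
        ⋂ q ∈ {q : Ideal ↥D' | q.IsPrime ∧ Subtype.val '' (q : Set ↥D') ≠ MMset k0 r n},
          locAt k0 r (Dset k0 r n) (Subtype.val '' (q : Set ↥D')) := by
  intro D' hD'
  obtain rfl : D' = Dring k0 r n := SetLike.coe_injective (hD'.trans (coe_Dring hn).symm)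
  have hn1 : 1 ≤ n := one_le_two.trans hn
  have hmax : (MMideal k0 r n).IsMaximal := MMideal_isMaximal hn1
  obtain ⟨τ, hτM, hτ⟩ := exists_mem_MMideal_coe_eq_inv_ambX' (k0 := k0) (r := r) hn1
  ext x
  simp only [← coe_Bring, ← coe_Dring hn, SetLike.mem_coe, Set.mem_iInter₂, Set.mem_ofPred_eq,
    ne_eq, image_val_eq_MMset_iff hn, mem_locAt_iff]
  constructor
  · rintro hx q ⟨hq, hqM⟩
    exact exists_notMem_smul_mem_of_isPrime_ne 1 hq hqM x fun s hs =>
      exists_pow_smul_mem_one_of_mem_Bring hn hx hs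
  · intro h
    obtain ⟨N, hN⟩ := exists_pow_smul_mem_of_forall_isPrime 1 τ x fun q hq hτq =>
      h q ⟨hq, fun hqM => hτq (hqM ▸ hτM)⟩
    exact mem_Bring_of_pow_smul_mem_one hn1 hτ hN
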